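/- arXiv:2010.04299 — 3 statements merged into one kernel-verified Lean document; each statement's English description precedes it below -/
import Mathlib

section
/- Let α be a real number with 1 < α < 3. Then |(4 − 2^{2−α}) ζ(1−α)| < 1, where ζ(1−α) is the analytically continued Riemann zeta function evaluated at the real point 1−α ∈ (−2, 0). -/
/-- The Riemann zeta function at a real argument (analytic continuation:
real part of the Mathlib complex `riemannZeta`, which is real on the real axis). -/
noncomputable def rzeta (x : ℝ) : ℝ := (riemannZeta (x : ℂ)).re

/-!
For `1 < x` the functional equation reads `ζ(1 - x) = 2 (2π)⁻ˣ Γ(x) cos(πx/2) ζ(x)`. The pole of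
`ζ` at `1` is cancelled by the zero of the cosine: `ζ(x) ≤ x / (x - 1)` and
`|cos(πx/2)| ≤ π (x - 1) / 2` give `|ζ(1 - x)| ≤ π (2π)⁻ˣ Γ(x + 1)`. Since `4 - 2²⁻ˣ ≤ 2ˣ` by AM-GM,
the quantity to be bounded is at most `Γ(x + 1) / πˣ⁻¹`. This ratio is log-convex in `x` and equals
`1` at `x = 1`, so it is less than `1` on all of `(1, 4)` because `Γ(5) = 24 < 27 < π³`.
-/

open Real

theorem norm_riemannZeta_le_re_div {s : ℂ} (hs : 1 < s.re) :
    ‖riemannZeta s‖ ≤ s.re / (s.re - 1) := by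
  have norm_term (n : ℕ) : ‖1 / ((n : ℂ) + 1) ^ s‖ = 1 / ((n + 1 : ℕ) : ℝ) ^ s.re := by
    rw [norm_div, norm_one, ← Complex.norm_natCast_cpow_of_pos n.succ_pos, Nat.cast_succ]
  have summable_norm : Summable fun n : ℕ ↦ ‖1 / ((n : ℂ) + 1) ^ s‖ := by
    simp only [norm_term]
    exact (summable_nat_add_iff 1).2 (summable_one_div_nat_rpow.2 hs)
  have remainder_nonneg : 0 ≤ s.re * ZetaAsymptotics.termTSum s.re :=
    mul_nonneg (by linarith) (tsum_nonneg fun n ↦ ZetaAsymptotics.term_nonneg _ _)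
  calc
    ‖riemannZeta s‖ ≤ ∑' n : ℕ, ‖1 / ((n : ℂ) + 1) ^ s‖ := by
      rw [zeta_eq_tsum_one_div_nat_add_one_cpow hs]
      exact norm_tsum_le_tsum_norm summable_norm
    _ = ∑' n : ℕ, 1 / ((n + 1 : ℕ) : ℝ) ^ s.re := tsum_congr norm_term
    _ ≤ 1 / (s.re - 1) + 1 := by
      have := ZetaAsymptotics.zeta_limit_aux1 hs
      push_cast at this ⊢
      linarith
    _ = s.re / (s.re - 1) := by
      have : s.re - 1 ≠ 0 := by linarith
      field_simp
      ring

theorem abs_cos_le_abs_sub_pi_div_two (x : ℝ) : |cos x| ≤ |x - π / 2| := by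
  rw [← sin_pi_div_two_sub, abs_sub_comm]
  exact abs_sin_le_abs

theorem norm_riemannZeta_one_sub_eq {x : ℝ} (hx : 0 < x) (hx1 : x ≠ 1) :
    ‖riemannZeta (1 - x)‖ =
      2 * (2 * π) ^ (-x) * Gamma x * |cos (π * x / 2)| * ‖riemannZeta x‖ := by
  have ne_neg_nat (n : ℕ) : (x : ℂ) ≠ -n := by
    have : (0 : ℝ) ≤ n := n.cast_nonneg
    exact_mod_cast (by linarith : x ≠ -n)
  have norm_two_pi_cpow : ‖(2 * π : ℂ) ^ (-x : ℂ)‖ = (2 * π) ^ (-x) := by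
    simpa using Complex.norm_cpow_eq_rpow_re_of_pos two_pi_pos (-x : ℂ)
  have norm_cos : ‖Complex.cos (π * x / 2)‖ = |cos (π * x / 2)| := by
    rw [← Real.norm_eq_abs, ← Complex.norm_real]
    push_cast
    rfl
  rw [riemannZeta_one_sub ne_neg_nat (by exact_mod_cast hx1), norm_mul, norm_mul, norm_mul,
    norm_mul, Complex.norm_ofNat, norm_two_pi_cpow, norm_cos, Complex.Gamma_ofReal,
    Complex.norm_real, Real.norm_of_nonneg (Gamma_pos_of_pos hx).le]

theorem norm_riemannZeta_one_sub_le {x : ℝ} (hx : 1 < x) :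
    ‖riemannZeta (1 - x)‖ ≤ π * (2 * π) ^ (-x) * Gamma (x + 1) := by
  have cos_le : |cos (π * x / 2)| ≤ π * (x - 1) / 2 := by
    refine (abs_cos_le_abs_sub_pi_div_two _).trans_eq ?_
    rw [show π * x / 2 - π / 2 = π * (x - 1) / 2 by ring, abs_of_pos]
    have : 0 < x - 1 := by linarith
    positivity
  have zeta_le : ‖riemannZeta x‖ ≤ x / (x - 1) := by
    simpa using norm_riemannZeta_le_re_div (s := x) (by simpa using hx)
  calc
    ‖riemannZeta (1 - x)‖
      = 2 * (2 * π) ^ (-x) * Gamma x * |cos (π * x / 2)| * ‖riemannZeta x‖ :=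
        norm_riemannZeta_one_sub_eq (by linarith) hx.ne'
    _ ≤ 2 * (2 * π) ^ (-x) * Gamma x * (π * (x - 1) / 2) * (x / (x - 1)) := by
      have : 0 < x - 1 := by linarith
      gcongr
    _ = π * (2 * π) ^ (-x) * Gamma (x + 1) := by
      have : x - 1 ≠ 0 := by linarith
      rw [Gamma_add_one (by linarith)]
      field_simp

theorem abs_four_sub_two_rpow_le {x : ℝ} (hx : 0 ≤ x) : |4 - (2 : ℝ) ^ (2 - x)| ≤ 2 ^ x := by
  have one_le : (1 : ℝ) ≤ 2 ^ x := one_le_rpow one_le_two hx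
  have rpow_eq : (2 : ℝ) ^ (2 - x) = 4 / 2 ^ x := by
    rw [rpow_sub two_pos, rpow_two]
    norm_num
  have le_four : 4 / (2 : ℝ) ^ x ≤ 4 := div_le_self (by norm_num) one_le
  have four_le : 4 ≤ (2 : ℝ) ^ x + 4 / 2 ^ x := by
    rw [← sub_nonneg, show (2 : ℝ) ^ x + 4 / 2 ^ x - 4 = (2 ^ x - 2) ^ 2 / 2 ^ x by
      field_simp; ring]
    positivity
  rw [rpow_eq, abs_of_nonneg (by linarith)]
  linarith

theorem abs_four_sub_two_rpow_mul_rzeta_one_sub_le {x : ℝ} (hx : 1 < x) :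
    |(4 - (2 : ℝ) ^ (2 - x)) * rzeta (1 - x)| ≤ Gamma (x + 1) / π ^ (x - 1) := by
  have rzeta_le : |rzeta (1 - x)| ≤ π * (2 * π) ^ (-x) * Gamma (x + 1) := by
    refine (Complex.abs_re_le_norm _).trans ?_
    simpa using norm_riemannZeta_one_sub_le hx
  calc
    |(4 - (2 : ℝ) ^ (2 - x)) * rzeta (1 - x)|
      ≤ 2 ^ x * (π * (2 * π) ^ (-x) * Gamma (x + 1)) := by
        rw [abs_mul]
        gcongr
        exact abs_four_sub_two_rpow_le (by linarith)
    _ = Gamma (x + 1) / π ^ (x - 1) := by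
      rw [rpow_neg two_pi_pos.le, mul_rpow two_pos.le pi_pos.le, rpow_sub_one pi_ne_zero]
      field_simp

theorem Gamma_add_one_lt_rpow_sub_one {b c x : ℝ} (hc : 0 ≤ c) (hb : Gamma (b + 1) < c ^ (b - 1))
    (hx : 1 < x) (hxb : x < b) : Gamma (x + 1) < c ^ (x - 1) := by
  have b_sub_one_pos : 0 < b - 1 := by linarith
  have weight_left_pos : 0 < (b - x) / (b - 1) := div_pos (by linarith) b_sub_one_pos
  have weight_right_pos : 0 < (x - 1) / (b - 1) := div_pos (by linarith) b_sub_one_pos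
  calc
    Gamma (x + 1) = Gamma ((b - x) / (b - 1) * 2 + (x - 1) / (b - 1) * (b + 1)) := by
      congr 1
      field_simp
      ring
    _ ≤ Gamma 2 ^ ((b - x) / (b - 1)) * Gamma (b + 1) ^ ((x - 1) / (b - 1)) :=
      Gamma_mul_add_mul_le_rpow_Gamma_mul_rpow_Gamma two_pos (by linarith) weight_left_pos
        weight_right_pos (by field_simp; ring)
    _ = Gamma (b + 1) ^ ((x - 1) / (b - 1)) := by rw [Gamma_two, one_rpow, one_mul]
    _ < (c ^ (b - 1)) ^ ((x - 1) / (b - 1)) :=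
      rpow_lt_rpow (Gamma_pos_of_pos (by linarith)).le hb weight_right_pos
    _ = c ^ (x - 1) := by rw [← rpow_mul hc, mul_div_cancel₀ _ b_sub_one_pos.ne']

theorem Gamma_five_lt_pi_pow_three : Gamma 5 < π ^ 3 :=
  calc
    Gamma 5 = 24 := by simp [Nat.factorial]
    _ < 3 ^ 3 := by norm_num
    _ < π ^ 3 := by gcongr; exact pi_gt_three

theorem stmt_13_general (α : ℝ) (h1 : 1 < α) (h4 : α < 4) :
    |(4 - (2 : ℝ) ^ (2 - α)) * rzeta (1 - α)| < 1 := by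
  have Gamma_lt_at_four : Gamma (4 + 1) < π ^ (4 - 1 : ℝ) := by
    simpa only [show (4 : ℝ) + 1 = 5 by norm_num, show (4 : ℝ) - 1 = 3 by norm_num, rpow_ofNat]
      using Gamma_five_lt_pi_pow_three
  refine (abs_four_sub_two_rpow_mul_rzeta_one_sub_le h1).trans_lt ?_
  rw [div_lt_one (by positivity)]
  exact Gamma_add_one_lt_rpow_sub_one pi_pos.le Gamma_lt_at_four h1 h4

/-- `|(4 - 2^{2-α}) ζ(1-α)| < 1` for `1 < α < 3`. -/
theorem stmt_13 (α : ℝ) (h1 : 1 < α) (h3 : α < 3) :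
    |(4 - (2 : ℝ) ^ (2 - α)) * rzeta (1 - α)| < 1 :=
  stmt_13_general α h1 (by linarith)
end

section
/- Fix a real α with 1 < α < 3/2. For even integers n ≥ 4, define λ_k(α,n) = 2 ∑_{j=1}^{n−1} j^{−α} cos(2πkj/n), the rescaled eigenvalues λ̃_k(α,n) = (λ_k(α,n) − λ_{n/2}(α,n)) / (λ_0(α,n) − λ_{n/2}(α,n)), and S_2(α,n) = (1/n) ∑_{k=1}^{n−1} (1 − λ̃_k(α,n))^{−2}. Then the sequence S_2(α,n) converges to a finite positive limit as even n → ∞. -/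
/-- Eigenvalues of the long-range circulant Hamiltonian. -/
noncomputable def lam (α : ℝ) (n k : ℕ) : ℝ :=
  2 * ∑ j ∈ Finset.Icc 1 (n - 1), (j : ℝ) ^ (-α) * Real.cos (2 * Real.pi * k * j / n)

/-- Rescaled eigenvalues `λ̃_k = (λ_k - λ_{n/2})/(λ_0 - λ_{n/2})` for even `n`. -/
noncomputable def lamT (α : ℝ) (n k : ℕ) : ℝ :=
  (lam α n k - lam α n (n / 2)) / (lam α n 0 - lam α n (n / 2))

/-- `S_q(α,n) = (1/n) ∑_{k=1}^{n-1} (1 - λ̃_k)^{-q}`. -/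
noncomputable def Sq (q : ℕ) (α : ℝ) (n : ℕ) : ℝ :=
  (1 / (n : ℝ)) * ∑ k ∈ Finset.Icc 1 (n - 1), (1 - lamT α n k) ^ (-(q : ℤ))

/-!
Since `α > 1`, half of the spectral gap `λ_0 - λ_k`, namely `∑ j^(-α) (1 - cos (2πkj/n))`, converges
to a dispersion relation `D(θ) = ∑' j^(-α) (1 - cos (jθ))` as `2πk/n → θ`, and `1 - λ̃_k` is the
quotient of the gaps at `k` and at `n/2`. By the symmetry `k ↦ n - k`, the sum `S_q(α, 2m)` is,
up to `O(1/m)`, a Riemann sum over `(0, 1]` for `D(π)^q ∫ D(πx)^(-q) dx`.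

The integrand is singular at `0`, so dominated convergence needs a bound uniform in `n`: the first
`π/θ` terms of the gap are already of total size at least `c θ^(α-1)`, because
`1 - cos (jθ) ≥ 2 (jθ/π)²` for `jθ ≤ π`. Hence the summands are `O(x^(-q(α-1)))`, which is
integrable exactly when `α < 1 + 1/q`.
-/

open Filter Finset MeasureTheory Topology
open scoped Real

section RiemannSums

variable {E : Type*} [NormedAddCommGroup E] [NormedSpace ℝ E] [CompleteSpace E]

lemma natCeil_eq_succ_of_mem_Ioc {k : ℕ} {x : ℝ} (hx : x ∈ Set.Ioc (k : ℝ) (k + 1 : ℕ)) :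
    ⌈x⌉₊ = k + 1 :=
  (Nat.ceil_eq_iff k.succ_ne_zero).2 hx

lemma integral_comp_natCeil (f : ℕ → E) (m : ℕ) :
    ∫ x in (0 : ℝ)..m, f ⌈x⌉₊ = ∑ k ∈ Icc 1 m, f k := by
  have eqOn_const (k : ℕ) : Set.EqOn (fun _ : ℝ => f (k + 1)) (fun x => f ⌈x⌉₊)
      (Set.uIoc (k : ℝ) (k + 1 : ℕ)) := fun x hx => by
    rw [Set.uIoc_of_le (by simp)] at hx
    simp only [natCeil_eq_succ_of_mem_Ioc hx]
  have integrable (k : ℕ) :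
      IntervalIntegrable (fun x : ℝ => f ⌈x⌉₊) volume k (k + 1 : ℕ) :=
    intervalIntegrable_const.congr (eqOn_const k)
  have integral_unit (k : ℕ) : ∫ x in (k : ℝ)..(k + 1 : ℕ), f ⌈x⌉₊ = f (k + 1) := by
    rw [← intervalIntegral.integral_congr_ae (.of_forall (eqOn_const k))]
    simp
  rw [← Nat.cast_zero, ← intervalIntegral.sum_integral_adjacent_intervals
    (a := fun k : ℕ => (k : ℝ)) fun k _ => integrable k, sum_congr rfl fun k _ => integral_unit k,
    range_eq_Ico, sum_Ico_add' f 0 m 1, zero_add, Ico_add_one_right_eq_Icc]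

lemma integral_comp_natCeil_mul (f : ℕ → E) {m : ℕ} (hm : m ≠ 0) :
    ∫ x in (0 : ℝ)..1, f ⌈m * x⌉₊ = (m : ℝ)⁻¹ • ∑ k ∈ Icc 1 m, f k := by
  rw [intervalIntegral.integral_comp_mul_left (fun x => f ⌈x⌉₊) (Nat.cast_ne_zero.2 hm), mul_zero,
    mul_one, integral_comp_natCeil]

lemma tendsto_average_of_dominated {F : ℕ → ℕ → E} {f : ℝ → E} (bound : ℝ → ℝ)
    (bound_integrable : IntervalIntegrable bound volume 0 1)
    (h_bound : ∀ᶠ m : ℕ in atTop, ∀ x ∈ Set.Ioc (0 : ℝ) 1, ‖F m ⌈m * x⌉₊‖ ≤ bound x)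
    (h_lim : ∀ x ∈ Set.Ioc (0 : ℝ) 1, Tendsto (fun m : ℕ => F m ⌈m * x⌉₊) atTop (𝓝 (f x))) :
    Tendsto (fun m : ℕ => (m : ℝ)⁻¹ • ∑ k ∈ Icc 1 m, F m k) atTop
      (𝓝 (∫ x in (0 : ℝ)..1, f x)) := by
  rw [← Set.uIoc_of_le zero_le_one] at h_bound h_lim
  have integrals_tendsto := intervalIntegral.tendsto_integral_filter_of_dominated_convergence
    (F := fun (m : ℕ) (x : ℝ) => F m ⌈m * x⌉₊) bound
    (.of_forall fun m => ((StronglyMeasurable.of_discrete (f := F m)).comp_measurable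
      (Nat.measurable_ceil.comp (measurable_const_mul (m : ℝ)))).aestronglyMeasurable)
    (h_bound.mono fun m hm => .of_forall hm) bound_integrable (.of_forall h_lim)
  refine integrals_tendsto.congr' ?_
  filter_upwards [eventually_ne_atTop 0] with m hm
  exact integral_comp_natCeil_mul (F m) hm

end RiemannSums

section Elementary

lemma sum_Icc_eq_two_mul_sub_of_symm {R : Type*} [CommRing R] {f : ℕ → R} {m : ℕ} (hm : m ≠ 0)
    (hf : ∀ k ≤ 2 * m, f (2 * m - k) = f k) :
    ∑ k ∈ Icc 1 (2 * m - 1), f k = 2 * ∑ k ∈ Icc 1 m, f k - f m := by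
  have upper_half : ∑ k ∈ Ico (m + 1) (2 * m), f k = ∑ k ∈ Ico 1 m, f k := by
    have reflected := sum_Ico_reflect f 1 (show m ≤ 2 * m + 1 by omega)
    rw [show 2 * m + 1 - m = m + 1 by omega, Nat.add_sub_cancel] at reflected
    rw [← reflected]
    exact sum_congr rfl fun k hk => hf k (by rw [mem_Ico] at hk; omega)
  rw [← Ico_add_one_right_eq_Icc, ← Ico_add_one_right_eq_Icc, Nat.sub_add_cancel (by omega),
    ← sum_Ico_consecutive f (show 1 ≤ m + 1 by omega) (by omega), upper_half,
    sum_Ico_succ_top (by omega)]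
  ring

lemma cube_div_three_le_sum_sq (M : ℕ) : (M : ℝ) ^ 3 / 3 ≤ ∑ j ∈ Icc 1 M, (j : ℝ) ^ 2 := by
  induction M with
  | zero => simp
  | succ M ih =>
    rw [sum_Icc_succ_top (by omega)]
    push_cast
    nlinarith [M.cast_nonneg (α := ℝ)]

lemma half_le_natFloor {y : ℝ} (hy : 1 ≤ y) : y / 2 ≤ ⌊y⌋₊ := by
  have one_le_floor : (1 : ℝ) ≤ ⌊y⌋₊ := mod_cast Nat.one_le_floor_iff y |>.2 hy
  linarith [Nat.lt_floor_add_one y]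

lemma inv_pow_le_mul_rpow_neg {c s x y : ℝ} (hc : 0 < c) (hx : 0 < x) (h : c * x ^ s ≤ y) (q : ℕ) :
    (y ^ q)⁻¹ ≤ (c ^ q)⁻¹ * x ^ (-(q * s)) := by
  have rpow_pow : (c * x ^ s) ^ q = c ^ q * x ^ (q * s) := by
    rw [mul_pow, ← Real.rpow_mul_natCast hx.le, mul_comm s]
  rw [Real.rpow_neg hx.le, ← mul_inv, ← rpow_pow]
  gcongr

end Elementary

section Dispersion

/-- The `j`-th term `j^(-α) (1 - cos (jθ))` of the dispersion relation; it vanishes at `j = 0`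
whatever the value of `0^(-α)`. -/
noncomputable def dispersionTerm (α θ : ℝ) (j : ℕ) : ℝ :=
  (j : ℝ) ^ (-α) * (1 - Real.cos (j * θ))

/-- Partial sums of the dispersion relation; with `N = n - 1` and `θ = 2πk/n` this is half of the
spectral gap `λ_0 - λ_k`. -/
noncomputable def truncatedDispersion (α : ℝ) (N : ℕ) (θ : ℝ) : ℝ :=
  ∑ j ∈ Icc 1 N, dispersionTerm α θ j

/-- The dispersion relation of the infinite chain, the limit of half of the spectral gaps. -/
noncomputable def dispersion (α θ : ℝ) : ℝ :=
  ∑' j, dispersionTerm α θ j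

variable {α θ : ℝ}

lemma dispersionTerm_zero : dispersionTerm α θ 0 = 0 := by
  simp [dispersionTerm]

lemma dispersionTerm_nonneg (j : ℕ) : 0 ≤ dispersionTerm α θ j :=
  mul_nonneg (by positivity) (sub_nonneg.2 (Real.cos_le_one _))

lemma dispersionTerm_le (j : ℕ) : dispersionTerm α θ j ≤ (j : ℝ) ^ (-α) * 2 :=
  mul_le_mul_of_nonneg_left (by linarith [Real.neg_one_le_cos (j * θ)]) (by positivity)

lemma norm_dispersionTerm_le (j : ℕ) : ‖dispersionTerm α θ j‖ ≤ (j : ℝ) ^ (-α) * 2 := by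
  rw [Real.norm_of_nonneg (dispersionTerm_nonneg j)]
  exact dispersionTerm_le j

lemma continuous_dispersionTerm (j : ℕ) : Continuous fun θ => dispersionTerm α θ j := by
  unfold dispersionTerm
  fun_prop

lemma summable_rpow_neg_mul_two (hα : 1 < α) : Summable fun j : ℕ => (j : ℝ) ^ (-α) * 2 :=
  (Real.summable_nat_rpow.2 (neg_lt_neg hα)).mul_right 2

lemma summable_dispersionTerm (hα : 1 < α) : Summable (dispersionTerm α θ) :=
  (summable_rpow_neg_mul_two hα).of_norm_bounded norm_dispersionTerm_le

lemma continuous_dispersion (hα : 1 < α) : Continuous (dispersion α) :=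
  continuous_tsum continuous_dispersionTerm (summable_rpow_neg_mul_two hα)
    fun j _ => norm_dispersionTerm_le j

lemma truncatedDispersion_two_pi_sub (N : ℕ) :
    truncatedDispersion α N (2 * π - θ) = truncatedDispersion α N θ := by
  simp only [truncatedDispersion, dispersionTerm, mul_sub _ (2 * π) θ, Real.cos_nat_mul_two_pi_sub]

lemma truncatedDispersion_le_dispersion (hα : 1 < α) (N : ℕ) :
    truncatedDispersion α N θ ≤ dispersion α θ :=
  (summable_dispersionTerm hα).sum_le_tsum _ fun j _ => dispersionTerm_nonneg j

lemma tendsto_truncatedDispersion {ι : Type*} {l : Filter ι} {N : ι → ℕ} {ϑ : ι → ℝ}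
    (hα : 1 < α) (hN : Tendsto N l atTop) (hϑ : Tendsto ϑ l (𝓝 θ)) :
    Tendsto (fun i => truncatedDispersion α (N i) (ϑ i)) l (𝓝 (dispersion α θ)) := by
  simp only [truncatedDispersion, sum_eq_tsum_indicator (L := .unconditional ℕ), coe_Icc]
  refine tendsto_tsum_of_dominated_convergence (summable_rpow_neg_mul_two hα) (fun j => ?_)
    (.of_forall fun i j => (norm_indicator_le_norm_self _ _).trans (norm_dispersionTerm_le j))
  refine (((continuous_dispersionTerm j).tendsto θ).comp hϑ).congr' ?_
  filter_upwards [hN.eventually_ge_atTop j] with i hi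
  rcases j.eq_zero_or_pos with rfl | hj
  · simp [dispersionTerm_zero]
  · rw [Set.indicator_of_mem (Set.mem_Icc.2 ⟨hj, hi⟩), Function.comp_apply]

lemma two_div_pi_sq_mul_sq_le_one_sub_cos {x : ℝ} (hx : |x| ≤ π) :
    2 / π ^ 2 * x ^ 2 ≤ 1 - Real.cos x := by
  linarith [Real.cos_le_one_sub_mul_cos_sq hx]

lemma sq_mul_rpow_le_truncatedDispersion (hα : 0 ≤ α) {M N : ℕ} (hM : M ≠ 0) (hMN : M ≤ N)
    (hθ : 0 ≤ θ) (hMθ : M * θ ≤ π) :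
    2 / (3 * π ^ 2) * θ ^ 2 * (M : ℝ) ^ (3 - α) ≤ truncatedDispersion α N θ := by
  have term_lower : ∀ j ∈ Icc 1 M,
      (M : ℝ) ^ (-α) * (2 / π ^ 2 * θ ^ 2) * (j : ℝ) ^ 2 ≤ dispersionTerm α θ j := fun j hj => by
    obtain ⟨one_le_j, j_le_M⟩ := mem_Icc.1 hj
    have jθ_le : |j * θ| ≤ π := by
      rw [abs_of_nonneg (by positivity)]
      exact le_trans (by gcongr) hMθ
    have rpow_le : (M : ℝ) ^ (-α) ≤ (j : ℝ) ^ (-α) :=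
      Real.rpow_le_rpow_of_nonpos (mod_cast one_le_j) (mod_cast j_le_M) (neg_nonpos.2 hα)
    calc (M : ℝ) ^ (-α) * (2 / π ^ 2 * θ ^ 2) * (j : ℝ) ^ 2
        = (M : ℝ) ^ (-α) * (2 / π ^ 2 * (j * θ) ^ 2) := by ring
      _ ≤ (j : ℝ) ^ (-α) * (1 - Real.cos (j * θ)) :=
        mul_le_mul rpow_le (two_div_pi_sq_mul_sq_le_one_sub_cos jθ_le) (by positivity)
          (by positivity)
  calc 2 / (3 * π ^ 2) * θ ^ 2 * (M : ℝ) ^ (3 - α)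
      = (M : ℝ) ^ (-α) * (2 / π ^ 2 * θ ^ 2) * ((M : ℝ) ^ 3 / 3) := by
        rw [show 3 - α = -α + (3 : ℕ) by push_cast; ring,
          Real.rpow_add_natCast (Nat.cast_ne_zero.2 hM)]
        field_simp
    _ ≤ (M : ℝ) ^ (-α) * (2 / π ^ 2 * θ ^ 2) * ∑ j ∈ Icc 1 M, (j : ℝ) ^ 2 := by
        gcongr
        exact cube_div_three_le_sum_sq M
    _ ≤ ∑ j ∈ Icc 1 M, dispersionTerm α θ j := by
        rw [mul_sum]
        exact sum_le_sum term_lower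
    _ ≤ truncatedDispersion α N θ :=
        sum_le_sum_of_subset_of_nonneg (Icc_subset_Icc_right hMN) fun j _ _ =>
          dispersionTerm_nonneg j

lemma exists_mul_rpow_le_truncatedDispersion (h0 : 0 ≤ α) (h3 : α ≤ 3) :
    ∃ c > 0, ∀ (N : ℕ) (θ : ℝ), 0 < θ → θ ≤ π → π ≤ N * θ →
      c * θ ^ (α - 1) ≤ truncatedDispersion α N θ := by
  refine ⟨2 / (3 * π ^ 2) * (π / 2) ^ (3 - α), by positivity, fun N θ hθ hθπ hN => ?_⟩
  have one_le : 1 ≤ π / θ := (one_le_div hθ).2 hθπ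
  have floor_ne_zero : ⌊π / θ⌋₊ ≠ 0 := (Nat.floor_pos.2 one_le).ne'
  have floor_le : ⌊π / θ⌋₊ ≤ N := Nat.floor_le_of_le ((div_le_iff₀ hθ).2 hN)
  have floor_mul_le : ⌊π / θ⌋₊ * θ ≤ π := (le_div_iff₀ hθ).1 (Nat.floor_le (by positivity))
  calc 2 / (3 * π ^ 2) * (π / 2) ^ (3 - α) * θ ^ (α - 1)
      = 2 / (3 * π ^ 2) * θ ^ 2 * (π / θ / 2) ^ (3 - α) := by
        rw [div_right_comm, Real.div_rpow (by positivity) hθ.le,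
          show α - 1 = (2 : ℕ) - (3 - α) by push_cast; ring, Real.rpow_sub hθ, Real.rpow_natCast]
        ring
    _ ≤ 2 / (3 * π ^ 2) * θ ^ 2 * (⌊π / θ⌋₊ : ℝ) ^ (3 - α) := by
        gcongr
        exact half_le_natFloor one_le
    _ ≤ truncatedDispersion α N θ :=
        sq_mul_rpow_le_truncatedDispersion h0 floor_ne_zero floor_le hθ.le floor_mul_le

lemma truncatedDispersion_pos {N : ℕ} (hN : N ≠ 0) (hθ : 0 < θ) (hθ' : θ < 2 * π) :
    0 < truncatedDispersion α N θ := by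
  have cos_lt_one : Real.cos θ < 1 := (Real.cos_le_one θ).lt_of_ne fun h =>
    hθ.ne' ((Real.cos_eq_one_iff_of_lt_of_lt (by linarith) hθ').1 h)
  refine sum_pos' (fun j _ => dispersionTerm_nonneg j)
    ⟨1, mem_Icc.2 ⟨le_rfl, Nat.one_le_iff_ne_zero.2 hN⟩, ?_⟩
  simpa [dispersionTerm] using cos_lt_one

lemma dispersion_pos (hα : 1 < α) (hθ : 0 < θ) (hθ' : θ < 2 * π) : 0 < dispersion α θ :=
  (truncatedDispersion_pos one_ne_zero hθ hθ').trans_le (truncatedDispersion_le_dispersion hα 1)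

end Dispersion

section SpectralGap

/-- Half of the spectral gap `λ_0 - λ_k` for `n = 2m`, whose momentum is `2πk/n = πk/m`. -/
noncomputable def halfGap (α : ℝ) (m k : ℕ) : ℝ :=
  truncatedDispersion α (2 * m - 1) (π * k / m)

variable {α : ℝ} {m : ℕ}

lemma lam_zero_sub_lam_two_mul (k : ℕ) :
    lam α (2 * m) 0 - lam α (2 * m) k = 2 * halfGap α m k := by
  rw [lam, lam, ← mul_sub, ← sum_sub_distrib, halfGap, truncatedDispersion]
  congr 1
  refine sum_congr rfl fun j _ => ?_
  have angle_eq : 2 * π * k * j / (2 * m : ℕ) = j * (π * k / m) := by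
    push_cast
    rw [mul_assoc, mul_assoc, mul_div_mul_left _ _ two_ne_zero]
    ring
  rw [angle_eq, dispersionTerm, Nat.cast_zero, mul_zero, zero_mul, zero_div, Real.cos_zero,
    ← mul_sub]

lemma halfGap_self (hm : m ≠ 0) : halfGap α m m = truncatedDispersion α (2 * m - 1) π := by
  rw [halfGap, mul_div_cancel_right₀ _ (Nat.cast_ne_zero.2 hm)]

lemma halfGap_self_pos (hm : m ≠ 0) : 0 < halfGap α m m := by
  rw [halfGap_self hm]
  exact truncatedDispersion_pos (by omega) Real.pi_pos (by linarith [Real.pi_pos])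

lemma halfGap_two_mul_sub (hm : m ≠ 0) {k : ℕ} (hk : k ≤ 2 * m) :
    halfGap α m (2 * m - k) = halfGap α m k := by
  have angle_eq : π * (2 * m - k : ℕ) / m = 2 * π - π * k / m := by
    push_cast [hk]
    field_simp
  rw [halfGap, angle_eq, truncatedDispersion_two_pi_sub, halfGap]

lemma one_sub_lamT_two_mul (hm : m ≠ 0) (k : ℕ) :
    1 - lamT α (2 * m) k = halfGap α m k / halfGap α m m := by
  have gap_ne_zero : lam α (2 * m) 0 - lam α (2 * m) m ≠ 0 := by
    rw [lam_zero_sub_lam_two_mul]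
    exact mul_ne_zero two_ne_zero (halfGap_self_pos hm).ne'
  rw [lamT, Nat.mul_div_cancel_left m two_pos, one_sub_div gap_ne_zero, sub_sub_sub_cancel_right,
    lam_zero_sub_lam_two_mul, lam_zero_sub_lam_two_mul, mul_div_mul_left _ _ two_ne_zero]

lemma Sq_two_mul (q : ℕ) (hm : m ≠ 0) :
    Sq q α (2 * m) =
      halfGap α m m ^ q * ((m : ℝ)⁻¹ • ∑ k ∈ Icc 1 m, (halfGap α m k ^ q)⁻¹) - (m : ℝ)⁻¹ / 2 := by
  have gap_pos : 0 < halfGap α m m := halfGap_self_pos hm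
  have summand_eq (k : ℕ) :
      (1 - lamT α (2 * m) k) ^ (-(q : ℤ)) = halfGap α m m ^ q * (halfGap α m k ^ q)⁻¹ := by
    rw [one_sub_lamT_two_mul hm, zpow_neg, zpow_natCast, div_pow, inv_div, div_eq_mul_inv]
  rw [Sq, sum_congr rfl fun k _ => summand_eq k, ← mul_sum,
    sum_Icc_eq_two_mul_sub_of_symm hm fun k hk => by rw [halfGap_two_mul_sub hm hk], smul_eq_mul]
  push_cast
  field_simp

lemma tendsto_halfGap {k : ℕ → ℕ} {x : ℝ} (hα : 1 < α)
    (hk : Tendsto (fun m : ℕ => (k m : ℝ) / m) atTop (𝓝 x)) :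
    Tendsto (fun m => halfGap α m (k m)) atTop (𝓝 (dispersion α (π * x))) := by
  have cutoff_tendsto : Tendsto (fun m : ℕ => 2 * m - 1) atTop atTop :=
    tendsto_atTop_mono (fun m => by omega) (tendsto_sub_atTop_nat 1)
  refine tendsto_truncatedDispersion hα cutoff_tendsto ?_
  simpa only [mul_div_assoc] using hk.const_mul π

lemma tendsto_halfGap_self (hα : 1 < α) :
    Tendsto (fun m => halfGap α m m) atTop (𝓝 (dispersion α π)) := by
  rw [← mul_one π]
  refine tendsto_halfGap hα (tendsto_const_nhds.congr' ?_)
  filter_upwards [eventually_ne_atTop 0] with m hm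
  exact (div_self (Nat.cast_ne_zero.2 hm)).symm

lemma tendsto_halfGap_natCeil_mul (hα : 1 < α) {x : ℝ} (hx : 0 ≤ x) :
    Tendsto (fun m : ℕ => halfGap α m ⌈m * x⌉₊) atTop (𝓝 (dispersion α (π * x))) := by
  refine tendsto_halfGap hα ?_
  simpa only [Function.comp_def, mul_comm] using
    (tendsto_nat_ceil_mul_div_atTop hx).comp tendsto_natCast_atTop_atTop

lemma exists_mul_rpow_le_halfGap_natCeil_mul (h1 : 1 ≤ α) (h3 : α ≤ 3) :
    ∃ c > 0, ∀ m : ℕ, m ≠ 0 → ∀ x ∈ Set.Ioc (0 : ℝ) 1,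
      c * x ^ (α - 1) ≤ halfGap α m ⌈m * x⌉₊ := by
  obtain ⟨c, hc, lower⟩ := exists_mul_rpow_le_truncatedDispersion (by linarith) h3
  refine ⟨c, hc, fun m hm x ⟨hx0, hx1⟩ => ?_⟩
  have hm0 : (0 : ℝ) < m := mod_cast hm.bot_lt
  have one_le_ceil : (1 : ℝ) ≤ ⌈m * x⌉₊ := mod_cast Nat.one_le_ceil_iff.2 (mul_pos hm0 hx0)
  have ceil_le : (⌈m * x⌉₊ : ℝ) ≤ m := mod_cast Nat.ceil_le.2 (mul_le_of_le_one_right hm0.le hx1)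
  set θ : ℝ := π * ⌈m * x⌉₊ / m with θ_def
  have x_le_θ : x ≤ θ := by
    rw [θ_def, le_div_iff₀ hm0, mul_comm x]
    nlinarith [Nat.le_ceil (m * x), Real.pi_gt_three]
  have θ_le_pi : θ ≤ π := by
    rw [θ_def, div_le_iff₀ hm0]
    gcongr
  have pi_le : π ≤ (2 * m - 1 : ℕ) * θ := by
    have m_le : (m : ℝ) ≤ (2 * m - 1 : ℕ) := mod_cast (by omega)
    calc π ≤ π * ⌈m * x⌉₊ := le_mul_of_one_le_right Real.pi_pos.le one_le_ceil
      _ = m * θ := by rw [θ_def, mul_div_cancel₀ _ hm0.ne']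
      _ ≤ (2 * m - 1 : ℕ) * θ := by gcongr
  calc c * x ^ (α - 1) ≤ c * θ ^ (α - 1) := by gcongr
    _ ≤ halfGap α m ⌈m * x⌉₊ := lower _ θ (hx0.trans_le x_le_θ) θ_le_pi pi_le

end SpectralGap

section Limit

variable {q : ℕ} {α : ℝ}

lemma intervalIntegrable_const_mul_rpow_neg {s : ℝ} (hs : s < 1) (C : ℝ) :
    IntervalIntegrable (fun x : ℝ => C * x ^ (-s)) volume 0 1 :=
  (intervalIntegral.intervalIntegrable_rpow' (neg_lt_neg hs)).const_mul C

lemma tendsto_average_inv_halfGap_pow (h1 : 1 < α) (h3 : α ≤ 3) (hq : q * (α - 1) < 1) :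
    Tendsto (fun m : ℕ => (m : ℝ)⁻¹ • ∑ k ∈ Icc 1 m, (halfGap α m k ^ q)⁻¹) atTop
      (𝓝 (∫ x in (0 : ℝ)..1, (dispersion α (π * x) ^ q)⁻¹)) := by
  obtain ⟨c, hc, lower⟩ := exists_mul_rpow_le_halfGap_natCeil_mul h1.le h3
  refine tendsto_average_of_dominated _ (intervalIntegrable_const_mul_rpow_neg hq (c ^ q)⁻¹) ?_ ?_
  · filter_upwards [eventually_ne_atTop 0] with m hm x hx
    have gap_lower := lower m hm x hx
    have gap_nonneg : 0 ≤ halfGap α m ⌈m * x⌉₊ :=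
      le_trans (mul_nonneg hc.le (Real.rpow_nonneg hx.1.le _)) gap_lower
    rw [Real.norm_of_nonneg (by positivity)]
    exact inv_pow_le_mul_rpow_neg hc hx.1 gap_lower q
  · intro x ⟨hx0, hx1⟩
    have limit_pos : 0 < dispersion α (π * x) :=
      dispersion_pos h1 (by positivity) (by nlinarith [Real.pi_pos])
    exact ((tendsto_halfGap_natCeil_mul h1 hx0.le).pow q).inv₀ (by positivity)

lemma intervalIntegrable_inv_dispersion_pow (h1 : 1 < α) (h3 : α ≤ 3) (hq : q * (α - 1) < 1) :
    IntervalIntegrable (fun x => (dispersion α (π * x) ^ q)⁻¹) volume 0 1 := by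
  obtain ⟨c, hc, lower⟩ := exists_mul_rpow_le_halfGap_natCeil_mul h1.le h3
  have limit_measurable : Measurable fun x => (dispersion α (π * x) ^ q)⁻¹ :=
    (((continuous_dispersion h1).measurable.comp (measurable_const_mul π)).pow_const q).inv
  refine (intervalIntegrable_const_mul_rpow_neg hq (c ^ q)⁻¹).mono_fun'
    limit_measurable.aestronglyMeasurable ((ae_restrict_mem measurableSet_uIoc).mono fun x hx => ?_)
  rw [Set.uIoc_of_le zero_le_one] at hx
  have limit_lower : c * x ^ (α - 1) ≤ dispersion α (π * x) :=
    ge_of_tendsto (tendsto_halfGap_natCeil_mul h1 hx.1.le)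
      ((eventually_ne_atTop 0).mono fun m hm => lower m hm x hx)
  have limit_nonneg : 0 ≤ dispersion α (π * x) := tsum_nonneg dispersionTerm_nonneg
  simp only [Real.norm_of_nonneg (inv_nonneg.2 (pow_nonneg limit_nonneg q))]
  exact inv_pow_le_mul_rpow_neg hc hx.1 limit_lower q

lemma integral_inv_dispersion_pow_pos (h1 : 1 < α) (h3 : α ≤ 3) (hq : q * (α - 1) < 1) :
    0 < ∫ x in (0 : ℝ)..1, (dispersion α (π * x) ^ q)⁻¹ := by
  refine intervalIntegral.intervalIntegral_pos_of_pos_on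
    (intervalIntegrable_inv_dispersion_pow h1 h3 hq) (fun x ⟨hx0, hx1⟩ => ?_) zero_lt_one
  have : 0 < dispersion α (π * x) :=
    dispersion_pos h1 (by positivity) (by nlinarith [Real.pi_pos])
  positivity

lemma tendsto_Sq_two_mul (h1 : 1 < α) (h3 : α ≤ 3) (hq : q * (α - 1) < 1) :
    Tendsto (fun m : ℕ => Sq q α (2 * m)) atTop
      (𝓝 (dispersion α π ^ q * ∫ x in (0 : ℝ)..1, (dispersion α (π * x) ^ q)⁻¹)) := by
  have remainder_tendsto : Tendsto (fun m : ℕ => (m : ℝ)⁻¹ / 2) atTop (𝓝 0) := by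
    simpa only [zero_div] using tendsto_inv_atTop_nhds_zero_nat.div_const (2 : ℝ)
  have main_tendsto := ((tendsto_halfGap_self h1).pow q).mul
    (tendsto_average_inv_halfGap_pow h1 h3 hq)
  rw [← sub_zero (_ * _)]
  refine (main_tendsto.sub remainder_tendsto).congr' ?_
  filter_upwards [eventually_ne_atTop 0] with m hm
  exact (Sq_two_mul q hm).symm

end Limit

theorem stmt_16_general (q : ℕ) (hq : 1 ≤ q) (α : ℝ) (h1 : 1 < α) (h2 : q * (α - 1) < 1) :
    ∃ L : ℝ, 0 < L ∧ Tendsto (fun n : ℕ => Sq q α (2 * n)) atTop (𝓝 L) := by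
  have h3 : α ≤ 3 := by nlinarith [Nat.one_le_cast (α := ℝ).2 hq]
  have dispersion_pi_pos : 0 < dispersion α π :=
    dispersion_pos h1 Real.pi_pos (by linarith [Real.pi_pos])
  exact ⟨_, mul_pos (pow_pos dispersion_pi_pos q) (integral_inv_dispersion_pow_pos h1 h3 h2),
    tendsto_Sq_two_mul h1 h3 h2⟩

/-- for `1 < α < 3/2`, `S_2(α,n)` converges to a finite positive
limit along even `n → ∞`. -/
theorem stmt_16 (α : ℝ) (h1 : 1 < α) (h2 : α < 3 / 2) :
    ∃ L : ℝ, 0 < L ∧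
      Filter.Tendsto (fun n : ℕ => Sq 2 α (2 * n)) Filter.atTop (nhds L) := by
  exact stmt_16_general 2 one_le_two α h1 (by push_cast; linarith)
end

section
/- Fix a real α with 3/2 < α < 2. For even integers n ≥ 4, define λ_k(α,n) = 2 ∑_{j=1}^{n−1} j^{−α} cos(2πkj/n), λ̃_k(α,n) = (λ_k(α,n) − λ_{n/2}(α,n)) / (λ_0(α,n) − λ_{n/2}(α,n)), and S_q(α,n) = (1/n) ∑_{k=1}^{n−1} (1 − λ̃_k(α,n))^{−q}. Then S_2(α,n) → ∞ as even n → ∞, while S_1(α,n) remains bounded; consequently the asymptotic fidelity F(α,n) = S_1(α,n)^2 / S_2(α,n) tends to 0. -/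
/-!
Write `Δ_k = λ_0 - λ_k = 2 ∑_j j^{-α} (1 - cos (2πkj/n))`, so that `1 - λ̃_k = Δ_k / Δ_{⌊n/2⌋}`.
For `1 < α ≤ 2` the denominator stays between two positive constants, and the quadratic behaviour of
`1 - cos` near `0` gives `Δ_k ≳ (k/n)^{α-1}` for `1 ≤ k ≤ n/2` and `Δ_1 ≲ n^{1-α}`; the other half
of the spectrum mirrors it under `k ↦ n - k`. Hence `S_q ≲ (1/n) ∑_{k ≤ n/2} (n/k)^{q(α-1)}`,
which for `q(α-1) < 1` is a Riemann sum of a convergent integral and stays bounded, while for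
`q(α-1) > 1` the single term `k = 1` of `S_q` is already of order `n^{q(α-1)-1}` and diverges.
-/

section

open Filter Finset Real Topology

lemma sub_one_rpow_le {x s : ℝ} (hs₀ : 0 ≤ s) (hs₁ : s ≤ 1) (hx : 1 ≤ x) :
    (x - 1) ^ s ≤ x ^ s - s * x ^ (s - 1) := by
  have hx₀ : 0 < x := by linarith
  have hinv : x⁻¹ ≤ 1 := inv_le_one_of_one_le₀ hx
  have bernoulli : (1 + -x⁻¹) ^ s ≤ 1 + s * -x⁻¹ :=
    rpow_one_add_le_one_add_mul_self (by linarith) hs₀ hs₁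
  calc (x - 1) ^ s = x ^ s * (1 + -x⁻¹) ^ s := by
        rw [← mul_rpow hx₀.le (by linarith)]
        congr 1
        field_simp
        ring
    _ ≤ x ^ s * (1 + s * -x⁻¹) := by gcongr
    _ = x ^ s - s * x ^ (s - 1) := by
        rw [rpow_sub_one hx₀.ne']
        ring

lemma sum_Icc_rpow_neg_le {s : ℝ} (hs₀ : 0 ≤ s) (hs₁ : s < 1) (n : ℕ) :
    ∑ k ∈ Icc 1 n, (k : ℝ) ^ (-s) ≤ (n : ℝ) ^ (1 - s) / (1 - s) := by
  have hpos : 0 < 1 - s := by linarith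
  induction n with
  | zero => simp [zero_rpow hpos.ne']
  | succ n ih =>
    have increment := sub_one_rpow_le (x := (n + 1 : ℕ)) hpos.le (by linarith) (by simp)
    rw [show 1 - s - 1 = -s by ring, Nat.cast_add_one, add_sub_cancel_right] at increment
    rw [sum_Icc_succ_top (by lia), Nat.cast_add_one]
    rw [le_div_iff₀ hpos] at ih ⊢
    linarith

lemma sum_Icc_div_rpow_le {s x : ℝ} (hs₀ : 0 ≤ s) (hs₁ : s < 1) {m : ℕ} (hm : m ≤ x) :
    ∑ k ∈ Icc 1 m, (x / k) ^ s ≤ x / (1 - s) := by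
  have hx : 0 ≤ x := m.cast_nonneg.trans hm
  have hpos : 0 < 1 - s := by linarith
  calc ∑ k ∈ Icc 1 m, (x / k) ^ s = x ^ s * ∑ k ∈ Icc 1 m, (k : ℝ) ^ (-s) := by
        rw [mul_sum]
        refine sum_congr rfl fun k _ ↦ ?_
        rw [div_rpow hx k.cast_nonneg, rpow_neg k.cast_nonneg, div_eq_mul_inv]
    _ ≤ x ^ s * ((m : ℝ) ^ (1 - s) / (1 - s)) := by
        gcongr
        exact sum_Icc_rpow_neg_le hs₀ hs₁ m
    _ ≤ x ^ s * (x ^ (1 - s) / (1 - s)) := by gcongr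
    _ = x / (1 - s) := by
        rw [← mul_div_assoc, ← rpow_add_of_nonneg hx hs₀ hpos.le, add_sub_cancel, rpow_one]

lemma sq_div_two_le_sum_Icc (m : ℕ) : (m : ℝ) ^ 2 / 2 ≤ ∑ j ∈ Icc 1 m, (j : ℝ) := by
  induction m with
  | zero => simp
  | succ m ih =>
    rw [sum_Icc_succ_top (by lia), Nat.cast_add_one]
    linarith

lemma sum_Icc_le_two_mul_sum_Icc_half {f : ℕ → ℝ} {n : ℕ} (hf : ∀ k, 0 ≤ f k)
    (hsymm : ∀ k ≤ n, f (n - k) = f k) :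
    ∑ k ∈ Icc 1 (n - 1), f k ≤ 2 * ∑ k ∈ Icc 1 (n / 2), f k := by
  have hcover : Icc 1 (n - 1) ⊆ Icc 1 (n / 2) ∪ (Icc 1 (n / 2)).image (n - ·) := by
    intro k hk
    simp only [mem_union, mem_image, mem_Icc] at hk ⊢
    by_cases hkn : k ≤ n / 2
    · exact .inl ⟨hk.1, hkn⟩
    · exact .inr ⟨n - k, by lia, by lia⟩
  have himage : ∑ k ∈ (Icc 1 (n / 2)).image (n - ·), f k = ∑ k ∈ Icc 1 (n / 2), f k := by
    rw [sum_image fun a ha b hb hab ↦ by simp only [coe_Icc, Set.mem_Icc] at ha hb hab; lia]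
    exact sum_congr rfl fun k hk ↦ hsymm k (by rw [mem_Icc] at hk; lia)
  calc ∑ k ∈ Icc 1 (n - 1), f k
      ≤ ∑ k ∈ Icc 1 (n / 2) ∪ (Icc 1 (n / 2)).image (n - ·), f k :=
        sum_le_sum_of_subset_of_nonneg hcover fun k _ _ ↦ hf k
    _ ≤ ∑ k ∈ Icc 1 (n / 2), f k + ∑ k ∈ (Icc 1 (n / 2)).image (n - ·), f k := by
        rw [← sum_union_inter]
        exact le_add_of_nonneg_right (sum_nonneg fun k _ ↦ hf k)
    _ = 2 * ∑ k ∈ Icc 1 (n / 2), f k := by rw [himage, two_mul]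

lemma two_mul_sq_le_one_sub_cos_pi_mul {t : ℝ} (ht : |t| ≤ 1) :
    2 * t ^ 2 ≤ 1 - cos (π * t) := by
  have hcos := cos_le_one_sub_mul_cos_sq (x := π * t) (by
    rw [abs_mul, abs_of_pos pi_pos]
    exact mul_le_of_le_one_right pi_pos.le ht)
  have hquad : 2 / π ^ 2 * (π * t) ^ 2 = 2 * t ^ 2 := by field_simp
  linarith

lemma rpow_mul_one_sub_cos_nonneg (α x : ℝ) (j : ℕ) : 0 ≤ (j : ℝ) ^ (-α) * (1 - cos x) :=
  mul_nonneg (by positivity) (sub_nonneg.2 (cos_le_one x))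

lemma rpow_mul_nat_le_rpow_mul_one_sub_cos {α y : ℝ} (hα : 1 ≤ α) (hy : 0 < y) {j : ℕ}
    (hj : 0 < j) (hjy : y * j ≤ 1) :
    2 * y ^ 2 * y ^ (α - 1) * j ≤ (j : ℝ) ^ (-α) * (1 - cos (π * (y * j))) := by
  have hj₀ : (0 : ℝ) < j := by exact_mod_cast hj
  have hrpow : y ^ (α - 1) ≤ (j : ℝ) ^ (1 - α) := by
    rw [← neg_sub α 1, rpow_neg hj₀.le, ← inv_rpow hj₀.le]
    have hy_le : y ≤ (j : ℝ)⁻¹ := by rwa [← one_div, le_div_iff₀ hj₀]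
    gcongr
  calc 2 * y ^ 2 * y ^ (α - 1) * j ≤ 2 * y ^ 2 * (j : ℝ) ^ (1 - α) * j := by gcongr
    _ = (j : ℝ) ^ (-α) * (2 * (y * j) ^ 2) := by
        rw [sub_eq_neg_add, rpow_add_one hj₀.ne']
        ring
    _ ≤ (j : ℝ) ^ (-α) * (1 - cos (π * (y * j))) := by
        gcongr
        exact two_mul_sq_le_one_sub_cos_pi_mul (by rwa [abs_of_pos (by positivity)])

-- The cut-off at `1 / y` keeps every angle in `[0, π]`, where a parabola bounds `1 - cos` below.
lemma rpow_div_four_le_sum_rpow_mul_one_sub_cos {α y : ℝ} (hα : 1 ≤ α) (hy₀ : 0 < y)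
    (hy₁ : y ≤ 1) :
    y ^ (α - 1) / 4 ≤ ∑ j ∈ Icc 1 ⌊y⁻¹⌋₊, (j : ℝ) ^ (-α) * (1 - cos (π * (y * j))) := by
  set m := ⌊y⁻¹⌋₊
  have hm : 1 / 2 ≤ y * m := by
    have hlt : y⁻¹ / 2 < m := Nat.div_two_lt_floor (one_le_inv₀ hy₀ |>.2 hy₁)
    calc 1 / 2 = y * (y⁻¹ / 2) := by field_simp
      _ ≤ y * m := by gcongr
  have hjy : ∀ j ∈ Icc 1 m, y * j ≤ 1 := fun j hj ↦
    (le_inv_mul_iff₀ hy₀).1 (by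
      simpa using (Nat.le_floor_iff (by positivity)).1 (mem_Icc.1 hj).2)
  calc y ^ (α - 1) / 4 = (1 / 2) ^ 2 * y ^ (α - 1) := by ring
    _ ≤ (y * m) ^ 2 * y ^ (α - 1) := by gcongr
    _ = 2 * y ^ 2 * y ^ (α - 1) * ((m : ℝ) ^ 2 / 2) := by ring
    _ ≤ 2 * y ^ 2 * y ^ (α - 1) * ∑ j ∈ Icc 1 m, (j : ℝ) := by
        gcongr
        exact sq_div_two_le_sum_Icc m
    _ ≤ ∑ j ∈ Icc 1 m, (j : ℝ) ^ (-α) * (1 - cos (π * (y * j))) := by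
        rw [mul_sum]
        exact sum_le_sum fun j hj ↦
          rpow_mul_nat_le_rpow_mul_one_sub_cos hα hy₀ (mem_Icc.1 hj).1 (hjy j hj)

/-- The distance `λ_0 - λ_k` of the `k`-th eigenvalue from the top of the spectrum. -/
noncomputable def spectralGap (α : ℝ) (n k : ℕ) : ℝ :=
  lam α n 0 - lam α n k

variable {α : ℝ} {n k p q : ℕ}

lemma spectralGap_eq_sum (α : ℝ) (n k : ℕ) :
    spectralGap α n k =
      2 * ∑ j ∈ Icc 1 (n - 1), (j : ℝ) ^ (-α) * (1 - cos (π * (2 * k / n * j))) := by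
  rw [spectralGap, lam, lam, ← mul_sub, ← sum_sub_distrib]
  congr 1
  refine sum_congr rfl fun j _ ↦ ?_
  rw [show 2 * π * k * j / n = π * (2 * k / n * j) by ring]
  simp [mul_sub]

lemma spectralGap_nonneg (α : ℝ) (n k : ℕ) : 0 ≤ spectralGap α n k := by
  rw [spectralGap_eq_sum]
  exact mul_nonneg zero_le_two (sum_nonneg fun j _ ↦ rpow_mul_one_sub_cos_nonneg ..)

lemma spectralGap_sub (hk : k ≤ n) : spectralGap α n (n - k) = spectralGap α n k := by
  rcases n.eq_zero_or_pos with rfl | hn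
  · simp [spectralGap_eq_sum]
  rw [spectralGap_eq_sum, spectralGap_eq_sum]
  congr 1
  refine sum_congr rfl fun j _ ↦ ?_
  have hangle : π * (2 * (n - k : ℕ) / n * j) = j * (2 * π) - π * (2 * k / n * j) := by
    rw [Nat.cast_sub hk]
    field_simp
  rw [hangle, cos_nat_mul_two_pi_sub]

lemma two_mul_one_sub_cos_le_spectralGap (hn : 2 ≤ n) :
    2 * (1 - cos (π * (2 * k / n))) ≤ spectralGap α n k := by
  rw [spectralGap_eq_sum]
  gcongr
  simpa using single_le_sum (s := Icc 1 (n - 1))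
    (f := fun j : ℕ ↦ (j : ℝ) ^ (-α) * (1 - cos (π * (2 * k / n * j))))
    (fun j _ ↦ rpow_mul_one_sub_cos_nonneg ..) (a := 1) (by rw [mem_Icc]; lia)

lemma spectralGap_pos (hk : 0 < k) (hkn : k < n) : 0 < spectralGap α n k := by
  have hn : (0 : ℝ) < n := by exact_mod_cast hk.trans hkn
  have hfrac : (k : ℝ) / n < 1 := (div_lt_one hn).2 (by exact_mod_cast hkn)
  have hangle : π * (2 * k / n) = 2 * π * (k / n) := by ring
  have hangle_pos : 0 < π * (2 * k / n) := by positivity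
  have hangle_lt : π * (2 * k / n) < 2 * π := by
    rw [hangle]
    exact mul_lt_of_lt_one_right two_pi_pos hfrac
  have hcos : cos (π * (2 * k / n)) < 1 := (cos_le_one _).lt_of_ne fun h ↦
    hangle_pos.ne' ((cos_eq_one_iff_of_lt_of_lt (by linarith [pi_pos]) hangle_lt).1 h)
  linarith [two_mul_one_sub_cos_le_spectralGap (α := α) (k := k) (show 2 ≤ n by lia)]

lemma two_le_spectralGap_half (hn : 2 ≤ n) : 2 ≤ spectralGap α n (n / 2) := by
  have hn₀ : (0 : ℝ) < n := by positivity
  have hlower : (1 : ℝ) / 2 ≤ 2 * (n / 2 : ℕ) / n := by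
    rw [div_le_div_iff₀ two_pos hn₀]
    exact_mod_cast (by lia : 1 * n ≤ 2 * (n / 2) * 2)
  have hupper : (2 : ℝ) * (n / 2 : ℕ) / n ≤ 1 :=
    (div_le_one hn₀).2 (by exact_mod_cast n.mul_div_le 2)
  have hcos : cos (π * (2 * (n / 2 : ℕ) / n)) ≤ 0 :=
    cos_nonpos_of_pi_div_two_le_of_le (by nlinarith [pi_pos]) (by nlinarith [pi_pos])
  linarith [two_mul_one_sub_cos_le_spectralGap (α := α) (k := n / 2) hn]

lemma spectralGap_le_tsum (hα : 1 < α) (n k : ℕ) :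
    spectralGap α n k ≤ 4 * ∑' j : ℕ, (j : ℝ) ^ (-α) := by
  have hsummable : Summable fun j : ℕ ↦ (j : ℝ) ^ (-α) := summable_nat_rpow.2 (by linarith)
  calc spectralGap α n k ≤ 2 * ∑ j ∈ Icc 1 (n - 1), (j : ℝ) ^ (-α) * 2 := by
        rw [spectralGap_eq_sum]
        gcongr with j
        linarith [neg_one_le_cos (π * (2 * k / n * j))]
    _ = 4 * ∑ j ∈ Icc 1 (n - 1), (j : ℝ) ^ (-α) := by
        rw [← sum_mul]
        ring
    _ ≤ 4 * ∑' j : ℕ, (j : ℝ) ^ (-α) := by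
        gcongr
        exact hsummable.sum_le_tsum _ fun j _ ↦ by positivity

lemma rpow_mul_one_sub_cos_le (hα : α ≤ 2) {j : ℕ} (hj : 0 < j) (hjn : j ≤ n) :
    (j : ℝ) ^ (-α) * (1 - cos (π * (2 * k / n * j))) ≤ 2 * (π * k) ^ 2 * (n : ℝ) ^ (-α) := by
  have hj₀ : (0 : ℝ) < j := by exact_mod_cast hj
  have hn₀ : (0 : ℝ) < n := by exact_mod_cast hj.trans_le hjn
  have hcos : 1 - cos (π * (2 * k / n * j)) ≤ (π * (2 * k / n * j)) ^ 2 / 2 := by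
    linarith [one_sub_sq_div_two_le_cos (x := π * (2 * k / n * j))]
  calc (j : ℝ) ^ (-α) * (1 - cos (π * (2 * k / n * j)))
      ≤ (j : ℝ) ^ (-α) * ((π * (2 * k / n * j)) ^ 2 / 2) := by gcongr
    _ = 2 * (π * k) ^ 2 / n ^ 2 * (j : ℝ) ^ (-α + 2) := by
        rw [rpow_add hj₀, rpow_two]
        ring
    _ ≤ 2 * (π * k) ^ 2 / n ^ 2 * (n : ℝ) ^ (-α + 2) := by
        gcongr
        linarith
    _ = 2 * (π * k) ^ 2 * (n : ℝ) ^ (-α) := by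
        rw [rpow_add hn₀, rpow_two]
        field_simp

lemma spectralGap_le_rpow (hα : α ≤ 2) (hn : 0 < n) :
    spectralGap α n k ≤ (2 * π * k) ^ 2 * (n : ℝ) ^ (1 - α) := by
  have hn₀ : (n : ℝ) ≠ 0 := by positivity
  calc spectralGap α n k
      ≤ 2 * ∑ j ∈ Icc 1 (n - 1), 2 * (π * k) ^ 2 * (n : ℝ) ^ (-α) := by
        rw [spectralGap_eq_sum]
        refine mul_le_mul_of_nonneg_left (sum_le_sum fun j hj ↦ ?_) zero_le_two
        rw [mem_Icc] at hj
        exact rpow_mul_one_sub_cos_le hα hj.1 (hj.2.trans (n.sub_le 1))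
    _ = 2 * ((n - 1 : ℕ) * (2 * (π * k) ^ 2 * (n : ℝ) ^ (-α))) := by simp
    _ ≤ 2 * (n * (2 * (π * k) ^ 2 * (n : ℝ) ^ (-α))) := by
        gcongr
        exact n.sub_le 1
    _ = (2 * π * k) ^ 2 * (n : ℝ) ^ (1 - α) := by
        rw [sub_eq_neg_add, rpow_add_one hn₀]
        ring

lemma rpow_div_two_le_spectralGap (hα : 1 ≤ α) (hk : 0 < k) (hkn : k ≤ n / 2) :
    (2 * k / n : ℝ) ^ (α - 1) / 2 ≤ spectralGap α n k := by
  have hk₁ : (1 : ℝ) ≤ k := by exact_mod_cast hk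
  have hn : 2 ≤ n := by lia
  have hn₀ : (0 : ℝ) < n := by positivity
  have hy₁ : (2 * k / n : ℝ) ≤ 1 := (div_le_one hn₀).2 (by exact_mod_cast (by lia : 2 * k ≤ n))
  have hfloor : ⌊(2 * k / n : ℝ)⁻¹⌋₊ ≤ n - 1 := by
    refine Nat.floor_le_of_le ?_
    rw [inv_div, Nat.cast_sub (by lia), Nat.cast_one, div_le_iff₀ (by positivity)]
    have hn₂ : (2 : ℝ) ≤ n := by exact_mod_cast hn
    nlinarith
  have hlow := rpow_div_four_le_sum_rpow_mul_one_sub_cos hα (by positivity) hy₁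
  have hsub := sum_le_sum_of_subset_of_nonneg (Icc_subset_Icc_right (a := 1) hfloor)
    fun j _ _ ↦ rpow_mul_one_sub_cos_nonneg α (π * (2 * k / n * j)) j
  rw [spectralGap_eq_sum]
  linarith

lemma one_sub_lamT (hn : 2 ≤ n) :
    1 - lamT α n k = spectralGap α n k / spectralGap α n (n / 2) := by
  have hhalf : spectralGap α n (n / 2) ≠ 0 := by linarith [two_le_spectralGap_half (α := α) hn]
  rw [lamT, ← spectralGap, one_sub_div hhalf]
  simp only [spectralGap, sub_sub_sub_cancel_right]

lemma Sq_eq_sum_spectralGap (hn : 2 ≤ n) :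
    Sq q α n =
      1 / n * ∑ k ∈ Icc 1 (n - 1), (spectralGap α n (n / 2) / spectralGap α n k) ^ q := by
  simp only [Sq, one_sub_lamT hn, zpow_neg, zpow_natCast, ← inv_pow, inv_div]

lemma spectralGap_ratio_nonneg (α : ℝ) (n k : ℕ) :
    0 ≤ spectralGap α n (n / 2) / spectralGap α n k :=
  div_nonneg (spectralGap_nonneg ..) (spectralGap_nonneg ..)

lemma Sq_nonneg (hn : 2 ≤ n) : 0 ≤ Sq q α n := by
  rw [Sq_eq_sum_spectralGap hn]
  exact mul_nonneg (by positivity)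
    (sum_nonneg fun k _ ↦ pow_nonneg (spectralGap_ratio_nonneg α n k) q)

lemma rpow_le_spectralGap_ratio_one (hα : α ≤ 2) (hn : 2 ≤ n) :
    (n : ℝ) ^ (α - 1) / (2 * π ^ 2) ≤ spectralGap α n (n / 2) / spectralGap α n 1 := by
  have hn₀ : (0 : ℝ) < n := by positivity
  calc (n : ℝ) ^ (α - 1) / (2 * π ^ 2) = 2 / ((2 * π * (1 : ℕ)) ^ 2 * (n : ℝ) ^ (1 - α)) := by
        rw [← neg_sub 1 α, rpow_neg hn₀.le, Nat.cast_one]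
        field_simp
    _ ≤ spectralGap α n (n / 2) / spectralGap α n 1 := by
        gcongr
        · exact spectralGap_nonneg ..
        · exact spectralGap_pos one_pos hn
        · exact two_le_spectralGap_half hn
        · exact spectralGap_le_rpow hα (by lia)

lemma rpow_le_Sq (hα : α ≤ 2) (hn : 2 ≤ n) :
    (n : ℝ) ^ (q * (α - 1) - 1) / (2 * π ^ 2) ^ q ≤ Sq q α n := by
  have hn₀ : (0 : ℝ) < n := by positivity
  have hratio := rpow_le_spectralGap_ratio_one hα hn
  calc (n : ℝ) ^ (q * (α - 1) - 1) / (2 * π ^ 2) ^ q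
      = 1 / n * ((n : ℝ) ^ (α - 1) / (2 * π ^ 2)) ^ q := by
        rw [rpow_sub_one hn₀.ne', mul_comm (q : ℝ), rpow_mul_natCast hn₀.le, div_pow]
        ring
    _ ≤ 1 / n * (spectralGap α n (n / 2) / spectralGap α n 1) ^ q := by gcongr
    _ ≤ Sq q α n := by
        rw [Sq_eq_sum_spectralGap hn]
        gcongr
        exact single_le_sum
          (f := fun k ↦ (spectralGap α n (n / 2) / spectralGap α n k) ^ q)
          (fun k _ ↦ pow_nonneg (spectralGap_ratio_nonneg α n k) q)
          (mem_Icc.2 (by lia))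

lemma spectralGap_ratio_le (hα : 1 < α) (hk : 0 < k) (hkn : k ≤ n / 2) :
    spectralGap α n (n / 2) / spectralGap α n k ≤
      8 * (∑' j : ℕ, (j : ℝ) ^ (-α)) * (n / 2 / k : ℝ) ^ (α - 1) := by
  have hn₀ : (0 : ℝ) < n := by exact_mod_cast (by lia : 0 < n)
  calc spectralGap α n (n / 2) / spectralGap α n k
      ≤ 4 * (∑' j : ℕ, (j : ℝ) ^ (-α)) / ((2 * k / n : ℝ) ^ (α - 1) / 2) := by
        gcongr
        · exact spectralGap_le_tsum hα n (n / 2)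
        · exact rpow_div_two_le_spectralGap hα.le hk hkn
    _ = 8 * (∑' j : ℕ, (j : ℝ) ^ (-α)) * (n / 2 / k : ℝ) ^ (α - 1) := by
        rw [show (n / 2 / k : ℝ) = (2 * k / n : ℝ)⁻¹ by rw [inv_div, div_div],
          inv_rpow (by positivity)]
        ring

lemma Sq_le (hα : 1 < α) (hq : q * (α - 1) < 1) (hn : 2 ≤ n) :
    Sq q α n ≤ (8 * ∑' j : ℕ, (j : ℝ) ^ (-α)) ^ q / (1 - q * (α - 1)) := by
  have hn₀ : (n : ℝ) ≠ 0 := by positivity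
  set ζ := ∑' j : ℕ, (j : ℝ) ^ (-α)
  set ratio : ℕ → ℝ := fun k ↦ spectralGap α n (n / 2) / spectralGap α n k
  have hratio : ∀ k, 0 ≤ ratio k := spectralGap_ratio_nonneg α n
  calc Sq q α n = 1 / n * ∑ k ∈ Icc 1 (n - 1), ratio k ^ q := Sq_eq_sum_spectralGap hn
    _ ≤ 1 / n * (2 * ∑ k ∈ Icc 1 (n / 2), ratio k ^ q) := by
        gcongr
        exact sum_Icc_le_two_mul_sum_Icc_half (fun k ↦ pow_nonneg (hratio k) q)
          fun k hk ↦ by simp only [ratio, spectralGap_sub hk]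
    _ ≤ 1 / n * (2 * ∑ k ∈ Icc 1 (n / 2), (8 * ζ * (n / 2 / k : ℝ) ^ (α - 1)) ^ q) := by
        gcongr with k hk
        · exact hratio k
        · exact spectralGap_ratio_le hα (mem_Icc.1 hk).1 (mem_Icc.1 hk).2
    _ = 1 / n * (2 * ((8 * ζ) ^ q * ∑ k ∈ Icc 1 (n / 2), (n / 2 / k : ℝ) ^ (q * (α - 1)))) := by
        rw [mul_sum (Icc 1 (n / 2)) _ ((8 * ζ) ^ q)]
        congr! 3 with k
        rw [mul_pow, mul_comm (q : ℝ), rpow_mul_natCast (by positivity)]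
    _ ≤ 1 / n * (2 * ((8 * ζ) ^ q * (n / 2 / (1 - q * (α - 1))))) := by
        gcongr
        exact sum_Icc_div_rpow_le (mul_nonneg q.cast_nonneg (by linarith)) hq Nat.cast_div_le
    _ = (8 * ζ) ^ q / (1 - q * (α - 1)) := by
        field_simp

lemma tendsto_Sq_atTop (hα : α ≤ 2) (hq : 1 < q * (α - 1)) :
    Tendsto (fun n ↦ Sq q α n) atTop atTop := by
  have hpow : Tendsto (fun n : ℕ ↦ (n : ℝ) ^ (q * (α - 1) - 1) / (2 * π ^ 2) ^ q) atTop atTop :=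
    ((tendsto_rpow_atTop (by linarith)).comp tendsto_natCast_atTop_atTop).atTop_div_const
      (by positivity)
  refine tendsto_atTop_mono' _ ?_ hpow
  filter_upwards [eventually_ge_atTop 2] with n hn
  exact rpow_le_Sq hα hn

theorem stmt_18_general (hα : α ≤ 2) (hp : p * (α - 1) < 1) (hq : 1 < q * (α - 1)) :
    Tendsto (fun n ↦ Sq q α n) atTop atTop ∧
    (∃ M : ℝ, ∀ n, 2 ≤ n → |Sq p α n| ≤ M) ∧
    Tendsto (fun n ↦ Sq p α n ^ 2 / Sq q α n) atTop (𝓝 0) := by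
  have hα₁ : 1 < α := sub_pos.1 (pos_of_mul_pos_right (one_pos.trans hq) q.cast_nonneg)
  have hdiverge := tendsto_Sq_atTop hα hq
  obtain ⟨M, hM⟩ : ∃ M : ℝ, ∀ n, 2 ≤ n → |Sq p α n| ≤ M :=
    ⟨_, fun n hn ↦ (abs_of_nonneg (Sq_nonneg hn)).trans_le (Sq_le hα₁ hp hn)⟩
  have hbounded : ∀ᶠ n in atTop, |Sq p α n ^ 2| ≤ M ^ 2 := by
    filter_upwards [eventually_ge_atTop 2] with n hn
    rw [abs_pow]
    exact pow_le_pow_left₀ (abs_nonneg _) (hM n hn) 2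
  exact ⟨hdiverge, ⟨M, hM⟩,
    bdd_le_mul_tendsto_zero' (M ^ 2) hbounded (tendsto_inv_atTop_zero.comp hdiverge)⟩

end

/-- for `3/2 < α < 2`, along even `n → ∞`: `S_2(α,n) → ∞`,
`S_1(α,n)` remains bounded, and the fidelity `F = S_1²/S_2` tends to `0`. -/
theorem stmt_18 (α : ℝ) (h1 : 3 / 2 < α) (h2 : α < 2) :
    Filter.Tendsto (fun n : ℕ => Sq 2 α (2 * n)) Filter.atTop Filter.atTop ∧
    (∃ M : ℝ, ∀ n : ℕ, 2 ≤ n → |Sq 1 α (2 * n)| ≤ M) ∧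
    Filter.Tendsto (fun n : ℕ => (Sq 1 α (2 * n)) ^ 2 / Sq 2 α (2 * n))
      Filter.atTop (nhds 0) := by
  have heven : Filter.Tendsto (fun n : ℕ ↦ 2 * n) Filter.atTop Filter.atTop :=
    Filter.tendsto_id.const_mul_atTop' two_pos
  obtain ⟨hdiverge, ⟨M, hM⟩, hfidelity⟩ := stmt_18_general (p := 1) (q := 2) h2.le
    (by norm_num; linarith) (by norm_num; linarith)
  exact ⟨hdiverge.comp heven, ⟨M, fun n hn ↦ hM (2 * n) (by lia)⟩, hfidelity.comp heven⟩
end
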